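/- arXiv:2011.13070 — 2 statements merged into one kernel-verified Lean document; each statement's English description precedes it below -/
import Mathlib

section
/- Let C be a category with all finite limits and a subobject classifier (Ω, t : 1 → Ω), and let X be an object of C. Then the slice category C/X has a subobject classifier, namely the object π₂ : Ω × X → X (the canonical projection from the product), with truth map t × id_X : (id_X : X → X) → (π₂ : Ω × X → X); the character of a monomorphism f : (a : A → X) ↪ (b : B → X) is the composite (χ_f × b) ∘ Δ_B : B → Ω × X, where χ_f : B → Ω is the character of f : A ↪ B in C and Δ_B : B → B × B is the diagonal. -/
open CategoryTheory CategoryTheory.Limits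

universe v u

/-- `(Ω, t)` is a subobject classifier: every monomorphism `f : A ↪ B` has a unique character
`χ_f : B ⟶ Ω` making the square with top the unique map `A ⟶ 1`, left `f`, right `t` and
bottom `χ_f` a pullback. -/
def IsClassifier {C : Type u} [Category.{v} C] [HasTerminal C]
    (Ω : C) (t : ⊤_ C ⟶ Ω) : Prop :=
  ∀ {A B : C} (f : A ⟶ B) [Mono f],
    ∃! χ : B ⟶ Ω, IsPullback (terminal.from A) f t χ

theorem over_char_iff {C : Type u} [Category.{v} C] [HasFiniteLimits C]
    (Ω : C) (t : ⊤_ C ⟶ Ω) (X : C) {U V : Over X} (f : U ⟶ V) [Mono f]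
    (c : V ⟶ Over.mk (prod.snd : Ω ⨯ X ⟶ X)) :
    IsPullback (Over.homMk U.hom : U ⟶ Over.mk (𝟙 X)) f
        (Over.homMk (prod.lift (terminal.from X ≫ t) (𝟙 X)) (prod.lift_snd _ _) :
          Over.mk (𝟙 X) ⟶ Over.mk (prod.snd : Ω ⨯ X ⟶ X)) c ↔
      IsPullback (terminal.from U.left) f.left t (c.left ≫ (prod.fst : Ω ⨯ X ⟶ Ω)) := by
  have hm : Mono f.left := inferInstance
  have hc : c.left ≫ (prod.snd : Ω ⨯ X ⟶ X) = V.hom := Over.w c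
  constructor
  · intro h
    refine ⟨⟨?_⟩, ⟨PullbackCone.IsLimit.mk _ (fun s => (h.lift
      (Over.homMk (s.snd ≫ V.hom) : Over.mk (s.snd ≫ V.hom) ⟶ Over.mk (𝟙 X))
      (Over.homMk s.snd) ?_).left) ?_ ?_ ?_⟩⟩
    · have := congrArg (fun k => k.left ≫ (prod.fst : Ω ⨯ X ⟶ Ω)) h.w
      simp only [Over.comp_left, Over.homMk_left, Category.assoc] at this
      erw [prod.lift_fst] at this
      rw [← this, ← Category.assoc]
      congr 1
      exact Subsingleton.elim _ _
    · ext1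
      simp only [Over.comp_left, Over.homMk_left]
      apply prod.hom_ext
      · rw [Category.assoc, Category.assoc]
        erw [prod.lift_fst, Category.assoc, ← s.condition]
        rw [← Category.assoc, ← Category.assoc]
        congr 1
        exact Subsingleton.elim _ _
      · rw [Category.assoc, Category.assoc]
        erw [prod.lift_snd, Category.assoc, hc]
        simp
    · intro s
      exact Subsingleton.elim _ _
    · intro s
      rw [← Over.comp_left, h.lift_snd]
      rfl
    · intro s m _ h2
      rw [← cancel_mono f.left, h2, ← Over.comp_left, h.lift_snd]
      rfl
  · intro h
    have hw : ∀ {W : Over X} (a : W ⟶ Over.mk (𝟙 X)) (b : W ⟶ V),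
        a ≫ (Over.homMk (prod.lift (terminal.from X ≫ t) (𝟙 X)) (prod.lift_snd _ _) :
          Over.mk (𝟙 X) ⟶ Over.mk (prod.snd : Ω ⨯ X ⟶ X)) = b ≫ c ↔
        terminal.from W.left ≫ t = b.left ≫ c.left ≫ (prod.fst : Ω ⨯ X ⟶ Ω) := by
      intro W a b
      have ha : a.left ≫ terminal.from X ≫ t = terminal.from W.left ≫ t := by
        rw [← Category.assoc]
        congr 1
        exact Subsingleton.elim _ _
      constructor
      · intro e
        have := congrArg (fun k => k.left ≫ (prod.fst : Ω ⨯ X ⟶ Ω)) e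
        simp only [Over.comp_left, Over.homMk_left, Category.assoc] at this
        erw [prod.lift_fst] at this
        rw [← this]
        exact ha.symm
      · intro e
        ext1
        simp only [Over.comp_left, Over.homMk_left]
        apply prod.hom_ext
        · rw [Category.assoc, Category.assoc]
          erw [prod.lift_fst, ← e]
          exact ha
        · rw [Category.assoc, Category.assoc]
          erw [prod.lift_snd, hc, Over.w b]
          exact Over.w a
    refine ⟨⟨(hw _ _).2 h.w⟩, ⟨PullbackCone.IsLimit.mk _ (fun s => Over.homMk (h.lift
      (terminal.from _) s.snd.left ((hw _ _).1 s.condition)) ?_) ?_ ?_ ?_⟩⟩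
    · rw [← Over.w f, h.lift_snd_assoc, Over.w]
    · intro s
      exact Over.mkIdTerminal.hom_ext _ _
    · intro s
      ext1
      simp
    · intro s m _ h2
      rw [← cancel_mono f, h2]
      ext1
      simp

/-- if `C` has all finite limits and a subobject classifier `(Ω, t)`, then for any
`X : C` the slice category `C/X` has a subobject classifier, namely `π₂ : Ω × X ⟶ X` with truth
map `t × 𝟙 X : (𝟙 X) ⟶ (π₂ : Ω × X ⟶ X)` (from the terminal object `𝟙 X` of `C/X`); the
character of a monomorphism `f : (a : A → X) ↪ (b : B → X)` is `(χ_f × b) ∘ Δ_B : B ⟶ Ω × X`,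
where `χ_f : B ⟶ Ω` is the character of `f : A ↪ B` in `C` and `Δ_B` is the diagonal: it is the
unique morphism making the classifying square in `C/X` a pullback. -/
theorem stmt_3 {C : Type u} [Category.{v} C] [HasFiniteLimits C]
    (Ω : C) (t : ⊤_ C ⟶ Ω) (hΩ : IsClassifier Ω t) (X : C)
    {U V : Over X} (f : U ⟶ V) [Mono f]
    (χ : V.left ⟶ Ω) (hχ : IsPullback (terminal.from U.left) f.left t χ) :
    IsPullback (Over.homMk U.hom : U ⟶ Over.mk (𝟙 X)) f
        (Over.homMk (prod.lift (terminal.from X ≫ t) (𝟙 X)) (prod.lift_snd _ _) :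
          Over.mk (𝟙 X) ⟶ Over.mk (prod.snd : Ω ⨯ X ⟶ X))
        (Over.homMk (prod.lift (𝟙 V.left) (𝟙 V.left) ≫ prod.map χ V.hom)
            (show (prod.lift (𝟙 V.left) (𝟙 V.left) ≫ prod.map χ V.hom) ≫ prod.snd = V.hom by
              simp; exact prod.lift_snd _ _) :
          V ⟶ Over.mk (prod.snd : Ω ⨯ X ⟶ X)) ∧
      ∀ χ' : V ⟶ Over.mk (prod.snd : Ω ⨯ X ⟶ X),
        IsPullback (Over.homMk U.hom : U ⟶ Over.mk (𝟙 X)) f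
          (Over.homMk (prod.lift (terminal.from X ≫ t) (𝟙 X)) (prod.lift_snd _ _) :
            Over.mk (𝟙 X) ⟶ Over.mk (prod.snd : Ω ⨯ X ⟶ X)) χ' →
        χ' = (Over.homMk (prod.lift (𝟙 V.left) (𝟙 V.left) ≫ prod.map χ V.hom)
            (show (prod.lift (𝟙 V.left) (𝟙 V.left) ≫ prod.map χ V.hom) ≫ prod.snd = V.hom by
              simp; exact prod.lift_snd _ _) :
          V ⟶ Over.mk (prod.snd : Ω ⨯ X ⟶ X)) := by
  refine ⟨(over_char_iff Ω t X f _).2 ?_, fun χ' h => ?_⟩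
  · convert hχ using 1
    simp
    exact prod.lift_fst _ _
  · have h1 := (over_char_iff Ω t X f χ').1 h
    have e := (hΩ f.left).unique h1 hχ
    ext1
    apply prod.hom_ext
    · rw [e]
      simp
      exact (prod.lift_fst _ _).symm
    · have := Over.w χ'
      simp only [Over.mk_hom] at this
      simp
      exact this.trans (prod.lift_snd _ _).symm
end

section
/- (Fundamental theorem of topoi.) Let C be a topos, i.e. a category with all finite limits and all finite colimits which is cartesian closed and has a subobject classifier, and let X be an object of C. Then the slice category C/X is a topos: it has all finite limits, all finite colimits, is cartesian closed, and has a subobject classifier. -/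
open CategoryTheory CategoryTheory.Limits

universe v u

namespace FTT

open MonoidalCategory CartesianMonoidalCategory MonoidalClosed

theorem isPullback_iff {C : Type u} [Category.{v} C] [HasTerminal C] {Ω : C} {t : ⊤_ C ⟶ Ω}
    {A B : C} (f : A ⟶ B) [Mono f] (χ : B ⟶ Ω) :
    IsPullback (terminal.from A) f t χ ↔
      ∀ (T : C) (y : T ⟶ B), (∃ u, u ≫ f = y) ↔ y ≫ χ = terminal.from T ≫ t := by
  constructor
  · intro h T y
    constructor
    · rintro ⟨u, rfl⟩
      rw [Category.assoc, ← h.w, ← Category.assoc, terminal.comp_from]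
    · intro e
      exact ⟨h.lift (terminal.from T) y e.symm, h.lift_snd _ _ _⟩
  · intro h
    have hc (s : PullbackCone t χ) : s.snd ≫ χ = terminal.from s.pt ≫ t := by
      rw [← s.condition]; congr 1; exact Subsingleton.elim _ _
    refine ⟨⟨((h A f).1 ⟨𝟙 _, by simp⟩).symm⟩, ⟨PullbackCone.IsLimit.mk _
      (fun s => ((h s.pt s.snd).2 (hc s)).choose) ?_ ?_ ?_⟩⟩
    · intro s; exact Subsingleton.elim _ _
    · intro s; exact ((h s.pt s.snd).2 (hc s)).choose_spec
    · intro s m _ h2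
      rw [← cancel_mono f, h2]
      exact (((h s.pt s.snd).2 (hc s)).choose_spec).symm

section
variable {C : Type u} [Category.{v} C] [HasFiniteLimits C]
  {Ω : C} {t : ⊤_ C ⟶ Ω} (hΩ : IsClassifier Ω t)

include hΩ
theorem cl_ext {Y : C} (χ χ' : Y ⟶ Ω)
    (h : ∀ (T : C) (y : T ⟶ Y), y ≫ χ = terminal.from T ≫ t ↔ y ≫ χ' = terminal.from T ≫ t) :
    χ = χ' := by
  have hp : IsPullback (terminal.from (pullback t χ)) (pullback.snd t χ) t χ := by
    have := IsPullback.of_hasPullback t χ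
    rwa [Subsingleton.elim (pullback.fst t χ) (terminal.from _)] at this
  refine (hΩ (pullback.snd t χ)).unique hp ?_
  rw [isPullback_iff] at hp ⊢
  intro T y
  rw [hp, h]

theorem cl_exists {U Y : C} (m : U ⟶ Y) [Mono m] : ∃ χ : Y ⟶ Ω,
    ∀ (T : C) (y : T ⟶ Y), (∃ u, u ≫ m = y) ↔ y ≫ χ = terminal.from T ≫ t := by
  obtain ⟨χ, h, _⟩ := hΩ m
  exact ⟨χ, (isPullback_iff _ _).1 h⟩

variable [CartesianMonoidalCategory C] [MonoidalClosed C]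

theorem pow (B : C) : ∃ (P : C) (mem : ∀ {T : C}, (T ⟶ B) → (T ⟶ P) → Prop),
    (∀ {T : C} (s s' : T ⟶ P),
      (∀ (T' : C) (k : T' ⟶ T) (b : T' ⟶ B), mem b (k ≫ s) ↔ mem b (k ≫ s')) → s = s') ∧
    (∀ {Y U : C} (f : U ⟶ B) (m : U ⟶ Y), Mono (lift f m) → ∃ s : Y ⟶ P,
      ∀ (T : C) (k : T ⟶ Y) (b : T ⟶ B), mem b (k ≫ s) ↔ ∃ u, u ≫ f = b ∧ u ≫ m = k) := by
  have key : ∀ {T Y : C} (b : T ⟶ B) (k : T ⟶ Y) (s : Y ⟶ (ihom B).obj Ω),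
      lift b (k ≫ s) ≫ (ihom.ev B).app Ω = lift b k ≫ uncurry s := by
    intro T Y b k s
    rw [uncurry_eq]; simp
  refine ⟨(ihom B).obj Ω, fun {T} b s => lift b s ≫ (ihom.ev B).app Ω = terminal.from T ≫ t,
    ?_, ?_⟩
  · intro T s s' h
    apply uncurry_injective
    apply cl_ext hΩ
    intro T' y
    have := h T' (y ≫ snd _ _) (y ≫ fst _ _)
    beta_reduce at this
    rw [key, key] at this
    have e : lift (y ≫ fst _ _) (y ≫ snd _ _) = y := by ext <;> simp
    rwa [e] at this
  · intro Y U f m hm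
    obtain ⟨χ, hχ⟩ := cl_exists hΩ (lift f m)
    refine ⟨curry χ, ?_⟩
    intro T k b
    beta_reduce
    rw [key, uncurry_curry, ← hχ]
    refine exists_congr fun u => ?_
    constructor
    · intro h
      constructor
      · simpa using congr($h ≫ fst _ _)
      · simpa using congr($h ≫ snd _ _)
    · rintro ⟨rfl, rfl⟩
      simp

theorem pmc (B : C) : ∃ (B' : C) (η : B ⟶ B'), Mono η ∧
    (∀ {Y : C} (g g' : Y ⟶ B'),
      (∀ (T : C) (y : T ⟶ Y) (b : T ⟶ B), y ≫ g = b ≫ η ↔ y ≫ g' = b ≫ η) → g = g') ∧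
    (∀ {Y U : C} (m : U ⟶ Y) (f : U ⟶ B), Mono m → ∃ g : Y ⟶ B',
      ∀ (T : C) (y : T ⟶ Y) (b : T ⟶ B), y ≫ g = b ≫ η ↔ ∃ u, u ≫ m = y ∧ u ≫ f = b) := by
  obtain ⟨P, mem, hext, hcomp⟩ := pow hΩ B
  obtain ⟨sing, hsing⟩ := hcomp (𝟙 B) (𝟙 B)
    ⟨fun a b h => by simpa using congr($h ≫ fst _ _)⟩
  obtain ⟨φ, hφ⟩ := hcomp (𝟙 B) sing ⟨fun a b h => by simpa using congr($h ≫ fst _ _)⟩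
  replace hsing : ∀ (T : C) (k : T ⟶ B) (b : T ⟶ B), mem b (k ≫ sing) ↔ b = k := by
    intro T k b
    rw [hsing]; simp
  replace hφ : ∀ (T : C) (k : T ⟶ P) (b : T ⟶ B), mem b (k ≫ φ) ↔ b ≫ sing = k := by
    intro T k b
    rw [hφ]; simp
  have hmono : ∀ {T : C} (b k : T ⟶ B), b ≫ sing = k ≫ sing → b = k := by
    intro T b k h
    rw [← hsing, ← h, hsing]
  have hs : sing ≫ φ = sing ≫ 𝟙 P := by
    apply hext
    intro T k b
    rw [← Category.assoc, hφ, Category.comp_id, hsing]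
    exact ⟨hmono _ _, fun h => by rw [h]⟩
  have hj : ∀ {T : C} (g : T ⟶ equalizer φ (𝟙 P)) (b : T ⟶ B),
      g = b ≫ equalizer.lift sing hs ↔ mem b (g ≫ equalizer.ι φ (𝟙 P)) := by
    intro T g b
    rw [← cancel_mono (equalizer.ι φ (𝟙 P))]
    have : g ≫ equalizer.ι φ (𝟙 P) = (g ≫ equalizer.ι φ (𝟙 P)) ≫ φ := by
      rw [Category.assoc, equalizer.condition, Category.comp_id]
    rw [this, hφ, ← this]
    simp [eq_comm]
  refine ⟨equalizer φ (𝟙 P), equalizer.lift sing hs, ⟨fun a b h => hmono _ _ ?_⟩, ?_, ?_⟩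
  · simpa using congr($h ≫ equalizer.ι φ (𝟙 P))
  · intro Y g g' h
    rw [← cancel_mono (equalizer.ι φ (𝟙 P))]
    apply hext
    intro T k b
    rw [← Category.assoc, ← Category.assoc, ← hj, ← hj, h]
  · intro Y U m f hm
    obtain ⟨s, hs'⟩ := hcomp f m ⟨fun a b h => by
      rw [← cancel_mono m]; simpa using congr($h ≫ snd _ _)⟩
    have hss : s ≫ φ = s ≫ 𝟙 P := by
      apply hext
      intro T k b
      rw [← Category.assoc, hφ, Category.comp_id]
      constructor
      · intro h
        rw [← h, hsing]
      · intro h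
        rw [hs'] at h
        obtain ⟨u, rfl, rfl⟩ := h
        apply hext
        intro T' k' c
        rw [← Category.assoc, hsing, ← Category.assoc k' (u ≫ m) s, hs']
        constructor
        · rintro rfl
          exact ⟨k' ≫ u, by simp, by simp⟩
        · rintro ⟨u', rfl, h⟩
          rw [← Category.assoc, cancel_mono] at h
          rw [h, Category.assoc]
    refine ⟨equalizer.lift s hss, ?_⟩
    intro T y b
    rw [hj, Category.assoc, equalizer.lift_ι, hs']
    exact exists_congr fun u => and_comm

theorem expo {X : C} (A B : Over X) : ∃ (E : Over X),
    ∃ ev : pullback A.hom E.hom ⟶ B.left, ev ≫ B.hom = pullback.fst _ _ ≫ A.hom ∧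
    ∀ (Y : Over X) (h : pullback A.hom Y.hom ⟶ B.left),
      h ≫ B.hom = pullback.fst _ _ ≫ A.hom →
      ∃! g : Y ⟶ E, pullback.lift (pullback.fst A.hom Y.hom) (pullback.snd A.hom Y.hom ≫ g.left)
        (by simp [pullback.condition]) ≫ ev = h := by
  obtain ⟨B', η, hη, bext, bcomp⟩ := pmc hΩ B.left
  obtain ⟨X', ξ, hξ, xext, xcomp⟩ := pmc hΩ X
  obtain ⟨qt, hqt⟩ := xcomp η B.hom hη
  obtain ⟨c, hc⟩ := xcomp (lift (𝟙 A.left) A.hom) A.hom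
    ⟨fun a b h => by simpa using congr($h ≫ fst _ _)⟩
  have hc' : ∀ {T : C} (a : T ⟶ A.left) (x z : T ⟶ X),
      lift a x ≫ c = z ≫ ξ ↔ a ≫ A.hom = x ∧ x = z := by
    intro T a x z
    rw [hc]
    constructor
    · rintro ⟨u, h1, h2⟩
      have e1 : u = a := by simpa using congr($h1 ≫ fst _ _)
      have e2 : u ≫ A.hom = x := by simpa using congr($h1 ≫ snd _ _)
      subst e1
      exact ⟨e2, e2.symm.trans h2⟩
    · rintro ⟨rfl, rfl⟩
      exact ⟨a, by ext <;> simp, rfl⟩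
  let E : Over X := Over.mk (pullback.snd ((ihom A.left).map qt) (curry c))
  let π : E.left ⟶ (ihom A.left).obj B' := pullback.fst ((ihom A.left).map qt) (curry c)
  have hE : π ≫ (ihom A.left).map qt = E.hom ≫ curry c := pullback.condition
  have hγ : ∀ {Y : C} (g : Y ⟶ E.left),
      uncurry (g ≫ π) ≫ qt = (A.left ◁ (g ≫ E.hom)) ≫ c := by
    intro Y g
    rw [← uncurry_natural_right, Category.assoc, hE, ← Category.assoc, uncurry_natural_left,
      uncurry_curry]
  have hw : (lift (pullback.fst A.hom E.hom) (pullback.snd A.hom E.hom) ≫ uncurry π) ≫ qt =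
      (pullback.fst A.hom E.hom ≫ A.hom) ≫ ξ := by
    have := hγ (𝟙 _)
    rw [Category.id_comp, Category.id_comp] at this
    rw [Category.assoc, this, lift_whiskerLeft_assoc, hc']
    exact ⟨pullback.condition, pullback.condition.symm⟩
  obtain ⟨ev, hev1, hev2⟩ := (hqt _ _ _).1 hw
  refine ⟨E, ev, hev2, ?_⟩
  intro Y h hh
  have hm : Mono (lift (pullback.fst A.hom Y.hom) (pullback.snd A.hom Y.hom)) :=
    ⟨fun a b h => by
      apply pullback.hom_ext
      · simpa using congr($h ≫ fst _ _)
      · simpa using congr($h ≫ snd _ _)⟩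
  have hF : ∀ g : Y ⟶ E,
      pullback.lift (pullback.fst A.hom Y.hom) (pullback.snd A.hom Y.hom ≫ g.left)
        (by simp [pullback.condition]) ≫ ev ≫ η =
      lift (pullback.fst A.hom Y.hom) (pullback.snd A.hom Y.hom) ≫ uncurry (g.left ≫ π) := by
    intro g
    rw [hev1, comp_lift_assoc, pullback.lift_fst, pullback.lift_snd, uncurry_natural_left,
      lift_whiskerLeft_assoc]
  apply existsUnique_of_exists_of_unique
  · obtain ⟨g0, hg0⟩ := bcomp _ h hm
    have e0 : curry g0 ≫ (ihom A.left).map qt = Y.hom ≫ curry c := by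
      apply uncurry_injective
      rw [uncurry_natural_right, uncurry_curry, uncurry_natural_left, uncurry_curry]
      apply xext
      intro T k x
      have e : lift (k ≫ fst _ _) (k ≫ snd _ _) = k := by ext <;> simp
      have e2 : k ≫ (A.left ◁ Y.hom) ≫ c = lift (k ≫ fst _ _) (k ≫ snd _ _ ≫ Y.hom) ≫ c := by
        conv_lhs => rw [← e]
        rw [lift_whiskerLeft_assoc, Category.assoc]
      rw [e2, hc', ← Category.assoc, hqt]
      constructor
      · rintro ⟨u, h1, h2⟩
        obtain ⟨v, rfl, rfl⟩ := (hg0 _ _ _).1 h1.symm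
        rw [Category.assoc, hh] at h2
        simp [pullback.condition] at h2 ⊢
        exact h2
      · rintro ⟨h1, h2⟩
        refine ⟨pullback.lift (k ≫ fst _ _) (k ≫ snd _ _) (by simpa using h1) ≫ h, ?_, ?_⟩
        · symm
          rw [hg0]
          exact ⟨_, by rw [comp_lift, pullback.lift_fst, pullback.lift_snd, e], rfl⟩
        · rw [Category.assoc, hh, pullback.lift_fst_assoc, h1, h2]
    obtain ⟨g, hg⟩ : ∃ g : Y ⟶ E, g.left ≫ π = curry g0 :=
      ⟨Over.homMk (pullback.lift (curry g0) Y.hom e0) (pullback.lift_snd _ _ _),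
        pullback.lift_fst _ _ _⟩
    refine ⟨g, ?_⟩
    rw [← cancel_mono η, Category.assoc, hF]
    rw [hg, uncurry_curry, hg0]
    exact ⟨𝟙 _, by simp, by simp⟩
  · have main : ∀ g g' : Y ⟶ E,
      pullback.lift (pullback.fst A.hom Y.hom) (pullback.snd A.hom Y.hom ≫ g.left)
        (by simp [pullback.condition]) ≫ ev = h →
      pullback.lift (pullback.fst A.hom Y.hom) (pullback.snd A.hom Y.hom ≫ g'.left)
        (by simp [pullback.condition]) ≫ ev = h →
      ∀ (T : C) (k : T ⟶ A.left ⊗ Y.left) (b : T ⟶ B.left),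
        k ≫ uncurry (g.left ≫ π) = b ≫ η → k ≫ uncurry (g'.left ≫ π) = b ≫ η := by
      intro g g' hg hg' T k b hk
      have e : lift (k ≫ fst _ _) (k ≫ snd _ _) = k := by ext <;> simp
      have h1 : k ≫ uncurry (g.left ≫ π) ≫ qt = (b ≫ B.hom) ≫ ξ := by
        rw [← Category.assoc, hqt]
        exact ⟨b, hk.symm, rfl⟩
      rw [hγ, Over.w, ← e, lift_whiskerLeft_assoc, hc'] at h1
      obtain ⟨w, e3⟩ : ∃ w, k = w ≫
          lift (pullback.fst A.hom Y.hom) (pullback.snd A.hom Y.hom) :=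
        ⟨pullback.lift (k ≫ fst _ _) (k ≫ snd _ _) h1.1, by
          rw [comp_lift, pullback.lift_fst, pullback.lift_snd, e]⟩
      have f1 := hF g
      have f2 := hF g'
      rw [← Category.assoc, hg] at f1
      rw [← Category.assoc, hg'] at f2
      rw [← hk, e3, Category.assoc, Category.assoc, ← f1, ← f2]
    intro g g' hg hg'
    ext
    apply pullback.hom_ext
    · apply uncurry_injective
      exact bext _ _ fun T k b => ⟨main g g' hg hg' T k b, main g' g hg' hg T k b⟩
    · exact (Over.w g).trans (Over.w g').symm

theorem closed (X : C) : ∃ cfp : CartesianMonoidalCategory (Over X),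
        Nonempty (@MonoidalClosed (Over X) _ cfp.toMonoidalCategory) := by
  let _ : CartesianMonoidalCategory (Over X) := Over.cartesianMonoidalCategory X
  refine ⟨inferInstance, ⟨⟨fun A => ?_⟩⟩⟩
  have : (tensorLeft A).IsLeftAdjoint := by
    have : ∀ B, HasTerminal (CostructuredArrow (tensorLeft A) B) := by
      intro B
      obtain ⟨E, ev, hev, huniv⟩ := expo hΩ A B
      let ev' : (tensorLeft A).obj E ⟶ B := Over.homMk ev hev
      have hm : ∀ {Y : Over X} (g : Y ⟶ E), ((tensorLeft A).map g).left =
          pullback.lift (pullback.fst A.hom Y.hom) (pullback.snd A.hom Y.hom ≫ g.left)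
            (by simp [pullback.condition]) := by
        intro Y g
        apply pullback.hom_ext
        · rw [pullback.lift_fst]
          exact congr($(whiskerLeft_fst A g).left)
        · rw [pullback.lift_snd]
          exact congr($(whiskerLeft_snd A g).left)
      have hu : ∀ Z : CostructuredArrow (tensorLeft A) B,
          ∃! g : Z.left ⟶ E, (tensorLeft A).map g ≫ ev' = Z.hom := by
        intro Z
        obtain ⟨g, hg, hg'⟩ := huniv Z.left Z.hom.left (Over.w Z.hom)
        refine ⟨g, ?_, ?_⟩
        · ext
          rw [Over.comp_left, hm]
          exact hg
        · intro g2 h2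
          apply hg'
          rw [← hm]
          exact congr($(h2).left)
      refine IsTerminal.hasTerminal (X := CostructuredArrow.mk ev') ?_
      exact IsTerminal.ofUniqueHom
        (fun Z => CostructuredArrow.homMk (hu Z).choose (hu Z).choose_spec.1)
        (fun Z m => by
          ext1
          exact (hu Z).choose_spec.2 _ (CostructuredArrow.w m))
    exact isLeftAdjoint_of_costructuredArrowTerminals _
  exact ⟨_, Adjunction.ofIsLeftAdjoint _⟩

theorem classifier (X : C) :
    ∃ (Ω' : Over X) (t' : ⊤_ (Over X) ⟶ Ω'), IsClassifier Ω' t' := by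
  let Ω' : Over X := Over.mk (snd Ω X)
  let t' : ⊤_ (Over X) ⟶ Ω' := Over.homMk (lift (terminal.from _ ≫ t) (⊤_ (Over X)).hom)
    (lift_snd _ _)
  have key : ∀ {T B : Over X} (y : T ⟶ B) (χ : B ⟶ Ω'), y ≫ χ = terminal.from T ≫ t' ↔
      y.left ≫ (χ.left ≫ fst _ _) = terminal.from T.left ≫ t := by
    intro T B y χ
    have e : (terminal.from T ≫ t').left ≫ fst _ _ = terminal.from T.left ≫ t := by
      simp [t']
    rw [← e]
    constructor
    · intro h
      rw [← h]; simp
    · intro h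
      ext1
      apply CartesianMonoidalCategory.hom_ext
      · simpa using h
      · exact (Over.w (y ≫ χ)).trans (Over.w (terminal.from T ≫ t')).symm
  refine ⟨Ω', t', ?_⟩
  intro A B f hf
  have : Mono f.left := inferInstance
  obtain ⟨χ, hχ⟩ := cl_exists hΩ f.left
  let χ' : B ⟶ Ω' := Over.homMk (lift χ B.hom) (lift_snd _ _)
  have eχ : χ'.left ≫ fst _ _ = χ := lift_fst _ _
  have fac : ∀ {T : Over X} (y : T ⟶ B), (∃ u, u ≫ f = y) ↔ (∃ u, u ≫ f.left = y.left) := by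
    intro T y
    constructor
    · rintro ⟨u, rfl⟩
      exact ⟨u.left, rfl⟩
    · rintro ⟨u, hu⟩
      exact ⟨Over.homMk u (by rw [← Over.w f, ← Category.assoc, hu, Over.w]), by ext; exact hu⟩
  refine ⟨χ', ?_, ?_⟩
  · show IsPullback _ _ _ _
    rw [isPullback_iff]
    intro T y
    rw [key, eχ, fac, hχ]
  · intro χ2 h2
    replace h2 := (isPullback_iff _ _).1 h2
    ext1
    apply CartesianMonoidalCategory.hom_ext
    · rw [eχ]
      apply cl_ext hΩ
      intro T y
      have := h2 (Over.mk (y ≫ B.hom)) (Over.homMk y)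
      rw [key, fac] at this
      rw [← hχ]
      exact this.symm
    · exact (Over.w χ2).trans (Over.w χ').symm

end

end FTT

/-- fundamental theorem of topoi: if `C` is a topos (all finite limits, all
finite colimits, cartesian closed, subobject classifier) then for every `X : C` the slice
category `C/X` is a topos: it has all finite limits, all finite colimits, is cartesian closed,
and has a subobject classifier. -/
theorem stmt_5 {C : Type u} [Category.{v} C] [HasFiniteLimits C] [HasFiniteColimits C]
    [CartesianMonoidalCategory C] [MonoidalClosed C]
    (Ω : C) (t : ⊤_ C ⟶ Ω) (hΩ : IsClassifier Ω t) (X : C) :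
    HasFiniteLimits (Over X) ∧ HasFiniteColimits (Over X) ∧
      (∃ cfp : CartesianMonoidalCategory (Over X),
        Nonempty (@MonoidalClosed (Over X) _ cfp.toMonoidalCategory)) ∧
      ∃ (Ω' : Over X) (t' : ⊤_ (Over X) ⟶ Ω'), IsClassifier Ω' t' := by
  refine ⟨?_, ?_, FTT.closed hΩ X, FTT.classifier hΩ X⟩
  · infer_instance
  · infer_instance
end
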